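/- For every real R, E_c^{ML}(R,Q) = max over ρ ∈ [−1,0] of { E₀(ρ,Q) − ρ·R }. If this maximum is attained at some ρ ∈ (−1,0], then the minimum defining E_c^{ML}(R,Q) is attained uniquely at the joint distribution T_ρ∘V_ρ; if it is attained at ρ = −1, then the minimizers of E_c^{ML}(R,Q) are exactly the joint distributions T_{−1}∘V with V admissible at −1 and D(T_{−1}∘V‖T_{−1}×Q) ≤ R. -/

import Mathlib

/-! The exponent is a convex minimization over joint distributions `J = T∘V`, and the claim is its
Lagrangian duality with an explicit dual function.

Only distributions supported in `{Q·P > 0}` have finite cost (`DQP_eq_top`); on that compact convex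
set (`jointSet`) the cost is the real number `A(J) + |R − B(J)|⁺` with `A = D(J‖Q∘P)` and
`B = D(J‖T×Q)`. Since `|a|⁺ = max_{ρ ∈ [−1,0]} (−ρ·a)`, the cost is the maximum over `ρ ∈ [−1,0]` of
`A + ρ·B − ρ·R`. This Lagrangian is affine in `ρ`, and convex in `J` because
`A + ρ·B = (1+ρ)·∑ J log J − ρ·∑ T log T + linear` (`convexOn_pen`). Sion's minimax theorem therefore
gives a saddle point (`strong_duality`).

The inner minimum is computed by two exact decompositions into relative entropies:
* for `ρ > −1`, `A + ρ·B = E₀(ρ) + (1+ρ)·∑_y D(J(·,y)‖T(y)V_ρ(·|y)) + D(T‖T_ρ)` (`pen_eq`);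
* for `ρ = −1`, `A − B = E₀(−1) + D(T‖T_{−1}) + ∑ J·(log max P − log P)` (`pen_neg_one_eq`).

All the remainders are nonnegative, and the equality case of Gibbs' inequality (`relEnt_eq_zero`)
identifies the minimizers: the single `T_ρ∘V_ρ` for `ρ > −1`, and the `T_{−1}∘V` with `V` admissible
for `ρ = −1`. A minimizer of the cost has cost `E₀(ρ) − ρ·R` for every dual optimal `ρ`, so it also
minimizes the Lagrangian at `ρ`, which gives the description of the minimizers; at `ρ = −1` the
extra condition `B ≤ R` says exactly that `|R − B|⁺ = R − B`. -/

open scoped BigOperators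
open Filter Topology

/-- `f` is a probability mass function on a finite alphabet. -/
def IsPMF {α : Type*} [Fintype α] (f : α → ℝ) : Prop :=
  (∀ a, 0 ≤ f a) ∧ ∑ a, f a = 1

/-- `P` is a discrete memoryless channel from `𝓧` to `𝓨`. -/
def IsChannel {𝓧 𝓨 : Type*} [Fintype 𝓧] [Fintype 𝓨] (P : 𝓧 → 𝓨 → ℝ) : Prop :=
  ∀ x, IsPMF (P x)

/-- `V` is a conditional pmf on `𝓧` given `𝓨`. -/
def IsCondPMF {𝓧 𝓨 : Type*} [Fintype 𝓧] [Fintype 𝓨] (V : 𝓨 → 𝓧 → ℝ) : Prop :=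
  ∀ y, IsPMF (V y)

/-- one term `s·log(s/t)` of a KL divergence, with the conventions
    `0·log(0/t) = 0` and `s·log(s/0) = +∞` for `s > 0`. -/
noncomputable def klTerm (s t : ℝ) : EReal :=
  if s = 0 then 0 else if t = 0 then ⊤ else ((s * Real.log (s / t) : ℝ) : EReal)

/-- `D(T∘V ‖ Q∘P)`. -/
noncomputable def DQP {𝓧 𝓨 : Type*} [Fintype 𝓧] [Fintype 𝓨]
    (T : 𝓨 → ℝ) (V : 𝓨 → 𝓧 → ℝ) (Q : 𝓧 → ℝ) (P : 𝓧 → 𝓨 → ℝ) : EReal :=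
  ∑ y, ∑ x, klTerm (T y * V y x) (Q x * P x y)

/-- `D(T∘V ‖ T×Q)`. -/
noncomputable def DTQ {𝓧 𝓨 : Type*} [Fintype 𝓧] [Fintype 𝓨]
    (T : 𝓨 → ℝ) (V : 𝓨 → 𝓧 → ℝ) (Q : 𝓧 → ℝ) : EReal :=
  ∑ y, ∑ x, klTerm (T y * V y x) (T y * Q x)

/-- Gallager's function `E₀(ρ,Q)` (for `ρ > −1`). -/
noncomputable def E0 {𝓧 𝓨 : Type*} [Fintype 𝓧] [Fintype 𝓨]
    (ρ : ℝ) (Q : 𝓧 → ℝ) (P : 𝓧 → 𝓨 → ℝ) : ℝ :=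
  - Real.log (∑ y, (∑ x, Q x * P x y ^ (1 / (1 + ρ))) ^ (1 + ρ))

/-- The joint distribution `T_ρ∘V_ρ` on `𝓧 × 𝓨` (for `ρ > −1`). -/
noncomputable def Jrho {𝓧 𝓨 : Type*} [Fintype 𝓧] [Fintype 𝓨]
    (ρ : ℝ) (Q : 𝓧 → ℝ) (P : 𝓧 → 𝓨 → ℝ) (x : 𝓧) (y : 𝓨) : ℝ :=
  Q x * P x y ^ (1 / (1 + ρ)) * (∑ a, Q a * P a y ^ (1 / (1 + ρ))) ^ ρ /
    ∑ y', (∑ a, Q a * P a y' ^ (1 / (1 + ρ))) ^ (1 + ρ)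

/-- `max_{x : Q(x) > 0} P(y|x)`. -/
noncomputable def maxP {𝓧 𝓨 : Type*} (Q : 𝓧 → ℝ) (P : 𝓧 → 𝓨 → ℝ) (y : 𝓨) : ℝ :=
  ⨆ x : {x // 0 < Q x}, P x.1 y

/-- `E₀(−1,Q) = −log ∑_y max_{x : Q(x)>0} P(y|x)`. -/
noncomputable def E0m1 {𝓧 𝓨 : Type*} [Fintype 𝓧] [Fintype 𝓨]
    (Q : 𝓧 → ℝ) (P : 𝓧 → 𝓨 → ℝ) : ℝ :=
  - Real.log (∑ y, maxP Q P y)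

/-- `E₀(ρ,Q)` extended to `ρ = −1`. -/
noncomputable def E0full {𝓧 𝓨 : Type*} [Fintype 𝓧] [Fintype 𝓨]
    (ρ : ℝ) (Q : 𝓧 → ℝ) (P : 𝓧 → 𝓨 → ℝ) : ℝ :=
  if ρ = -1 then E0m1 Q P else E0 ρ Q P

/-- `T_{−1}(y) ∝ max_{a : Q(a)>0} P(y|a)`. -/
noncomputable def Tm1 {𝓧 𝓨 : Type*} [Fintype 𝓧] [Fintype 𝓨]
    (Q : 𝓧 → ℝ) (P : 𝓧 → 𝓨 → ℝ) (y : 𝓨) : ℝ :=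
  maxP Q P y / ∑ y', maxP Q P y'

/-- `V` is admissible at `ρ = −1`: `V(x|y) = 0` for every `x` outside
    `argmax_{a : Q(a)>0} P(y|a)`. -/
def AdmissibleAtM1 {𝓧 𝓨 : Type*} [Fintype 𝓧] [Fintype 𝓨]
    (Q : 𝓧 → ℝ) (P : 𝓧 → 𝓨 → ℝ) (V : 𝓨 → 𝓧 → ℝ) : Prop :=
  ∀ y x, ¬ (0 < Q x ∧ ∀ a, 0 < Q a → P a y ≤ P x y) → V y x = 0

/-- the error exponent `E_e(R,Q)`. -/
noncomputable def Ee {𝓧 𝓨 : Type*} [Fintype 𝓧] [Fintype 𝓨]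
    (R : ℝ) (Q : 𝓧 → ℝ) (P : 𝓧 → 𝓨 → ℝ) : EReal :=
  sInf {v | ∃ T : 𝓨 → ℝ, ∃ V : 𝓨 → 𝓧 → ℝ, IsPMF T ∧ IsCondPMF V ∧
    v = DQP T V Q P + max (DTQ T V Q - (R : EReal)) 0}

/-- the ML correct-decoding exponent `E_c^{ML}(R,Q)`. -/
noncomputable def EcML {𝓧 𝓨 : Type*} [Fintype 𝓧] [Fintype 𝓨]
    (R : ℝ) (Q : 𝓧 → ℝ) (P : 𝓧 → 𝓨 → ℝ) : EReal :=
  sInf {v | ∃ T : 𝓨 → ℝ, ∃ V : 𝓨 → 𝓧 → ℝ, IsPMF T ∧ IsCondPMF V ∧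
    v = DQP T V Q P + max ((R : EReal) - DTQ T V Q) 0}

/-- the strict correct-decoding exponent `E_c(R,Q)` (`+∞` if infeasible). -/
noncomputable def Ec {𝓧 𝓨 : Type*} [Fintype 𝓧] [Fintype 𝓨]
    (R : ℝ) (Q : 𝓧 → ℝ) (P : 𝓧 → 𝓨 → ℝ) : EReal :=
  sInf {v | ∃ T : 𝓨 → ℝ, ∃ V : 𝓨 → 𝓧 → ℝ, IsPMF T ∧ IsCondPMF V ∧
    (R : EReal) ≤ DTQ T V Q ∧ v = DQP T V Q P}

/-- the mutual information `I(Q∘P)`. -/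
noncomputable def MI {𝓧 𝓨 : Type*} [Fintype 𝓧] [Fintype 𝓨]
    (Q : 𝓧 → ℝ) (P : 𝓧 → 𝓨 → ℝ) : ℝ :=
  ∑ x, ∑ y, if Q x * P x y = 0 then 0
    else Q x * P x y * Real.log (P x y / ∑ a, Q a * P a y)

/-- the capacity `C(Z)` of the channel restricted to input letters in `Z`. -/
noncomputable def capacity {𝓧 𝓨 : Type*} [Fintype 𝓧] [Fintype 𝓨]
    (P : 𝓧 → 𝓨 → ℝ) (Z : Set 𝓧) : ℝ :=
  sSup {c | ∃ Q' : 𝓧 → ℝ, IsPMF Q' ∧ (∀ x, 0 < Q' x → x ∈ Z) ∧ c = MI Q' P}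

/-- `R_{−1}^{−}(Q)`. -/
noncomputable def Rm1minus {𝓧 𝓨 : Type*} [Fintype 𝓧] [Fintype 𝓨]
    (Q : 𝓧 → ℝ) (P : 𝓧 → 𝓨 → ℝ) : EReal :=
  sInf {v | ∃ V : 𝓨 → 𝓧 → ℝ, IsCondPMF V ∧ AdmissibleAtM1 Q P V ∧
    v = DTQ (Tm1 Q P) V Q}

/-- `R_{−1}^{+}(Q)`. -/
noncomputable def Rm1plus {𝓧 𝓨 : Type*} [Fintype 𝓧] [Fintype 𝓨]
    (Q : 𝓧 → ℝ) (P : 𝓧 → 𝓨 → ℝ) : EReal :=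
  sSup {v | ∃ V : 𝓨 → 𝓧 → ℝ, IsCondPMF V ∧ AdmissibleAtM1 Q P V ∧
    v = DTQ (Tm1 Q P) V Q}

/-- `F_ρ(T∘V, Q) = D(T∘V‖Q∘P) + ρ·D(T∘V‖T×Q)`. -/
noncomputable def Frho {𝓧 𝓨 : Type*} [Fintype 𝓧] [Fintype 𝓨]
    (ρ : ℝ) (T : 𝓨 → ℝ) (V : 𝓨 → 𝓧 → ℝ) (Q : 𝓧 → ℝ) (P : 𝓧 → 𝓨 → ℝ) : EReal :=
  DQP T V Q P + (ρ : EReal) * DTQ T V Q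

/-- the unconstrained penalized minimum
    `min_{T,V} { D(T∘V‖Q∘P) + ρ·(D(T∘V‖T×Q) − R) }`. -/
noncomputable def penMin {𝓧 𝓨 : Type*} [Fintype 𝓧] [Fintype 𝓨]
    (Q : 𝓧 → ℝ) (P : 𝓧 → 𝓨 → ℝ) (R ρ : ℝ) : EReal :=
  sInf {v | ∃ T : 𝓨 → ℝ, ∃ V : 𝓨 → 𝓧 → ℝ, IsPMF T ∧ IsCondPMF V ∧
    v = DQP T V Q P + (ρ : EReal) * (DTQ T V Q - (R : EReal))}

/-- the support-constrained penalized minimum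
    `min_{T,V : supp(V) ⊆ supp(Q)} { D(T∘V‖Q∘P) − ρ·(R − D(T∘V‖T×Q)) }`. -/
noncomputable def penMinS {𝓧 𝓨 : Type*} [Fintype 𝓧] [Fintype 𝓨]
    (Q : 𝓧 → ℝ) (P : 𝓧 → 𝓨 → ℝ) (R ρ : ℝ) : EReal :=
  sInf {v | ∃ T : 𝓨 → ℝ, ∃ V : 𝓨 → 𝓧 → ℝ, IsPMF T ∧ IsCondPMF V ∧
    (∀ y x, Q x = 0 → V y x = 0) ∧
    v = DQP T V Q P - (ρ : EReal) * ((R : EReal) - DTQ T V Q)}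

/-! ### Gibbs' inequality -/

lemma gibbs_term {p q : ℝ} (hp : 0 ≤ p) (hq : 0 ≤ q) (h : q = 0 → p = 0) :
    0 ≤ p * (Real.log p - Real.log q) - (p - q) ∧
      (p * (Real.log p - Real.log q) - (p - q) = 0 → p = q) := by
  rcases hp.eq_or_lt with rfl | hp
  · constructor
    · simpa using hq
    · intro h0
      simp only [zero_mul, zero_sub, neg_neg] at h0
      linarith
  have hq' : 0 < q := lt_of_le_of_ne hq (fun e => hp.ne' (h e.symm))
  by_cases hpq : p = q
  · subst hpq; simp
  have h1 : Real.log (q / p) < q / p - 1 :=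
    Real.log_lt_sub_one_of_pos (by positivity) (by
      rw [Ne, div_eq_one_iff_eq hp.ne']; exact fun e => hpq e.symm)
  rw [Real.log_div hq'.ne' hp.ne'] at h1
  have h2 : p * (Real.log q - Real.log p) < p * (q / p - 1) := mul_lt_mul_of_pos_left h1 hp
  have h3 : p * (q / p - 1) = q - p := by field_simp
  constructor
  · nlinarith
  · intro h0; nlinarith

/-- The relative entropy `∑ p log (p/q)` of nonnegative vectors; it has its usual meaning when `p`
vanishes wherever `q` does. -/
noncomputable def relEnt {ι : Type*} [Fintype ι] (p q : ι → ℝ) : ℝ :=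
  ∑ i, p i * (Real.log (p i) - Real.log (q i))

section Gibbs

variable {ι : Type*} [Fintype ι] {p q : ι → ℝ}

lemma relEnt_eq_sum (hs : ∑ i, p i = ∑ i, q i) :
    relEnt p q = ∑ i, (p i * (Real.log (p i) - Real.log (q i)) - (p i - q i)) := by
  rw [Finset.sum_sub_distrib, Finset.sum_sub_distrib, hs, relEnt]
  ring

lemma relEnt_nonneg (hp : ∀ i, 0 ≤ p i) (hq : ∀ i, 0 ≤ q i) (h : ∀ i, q i = 0 → p i = 0)
    (hs : ∑ i, p i = ∑ i, q i) : 0 ≤ relEnt p q := by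
  rw [relEnt_eq_sum hs]
  exact Finset.sum_nonneg fun i _ => (gibbs_term (hp i) (hq i) (h i)).1

lemma relEnt_eq_zero (hp : ∀ i, 0 ≤ p i) (hq : ∀ i, 0 ≤ q i) (h : ∀ i, q i = 0 → p i = 0)
    (hs : ∑ i, p i = ∑ i, q i) (h0 : relEnt p q = 0) : p = q := by
  rw [relEnt_eq_sum hs, Finset.sum_eq_zero_iff_of_nonneg
    (fun i _ => (gibbs_term (hp i) (hq i) (h i)).1)] at h0
  funext i
  exact (gibbs_term (hp i) (hq i) (h i)).2 (h0 i (Finset.mem_univ i))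

lemma relEnt_self : relEnt p p = 0 := by simp [relEnt]

end Gibbs

/-! ### The Lagrangian on joint distributions -/

/-- The joint distributions on `𝓨 × 𝓧` that are absolutely continuous with respect to `Q∘P`. -/
def jointSet {𝓧 𝓨 : Type*} [Fintype 𝓧] [Fintype 𝓨] (Q : 𝓧 → ℝ) (P : 𝓧 → 𝓨 → ℝ) :
    Set (𝓨 → 𝓧 → ℝ) :=
  {J | (∀ y x, 0 ≤ J y x) ∧ ∑ y, ∑ x, J y x = 1 ∧ ∀ y x, Q x * P x y = 0 → J y x = 0}

/-- The real number `D(J‖T×Q)` for `J ∈ jointSet Q P`, with `T` the `𝓨`-marginal of `J`; off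
`jointSet` this, like `pen` and `cost` below, has no meaning. -/
noncomputable def mutB {𝓧 𝓨 : Type*} [Fintype 𝓧] [Fintype 𝓨] (Q : 𝓧 → ℝ) (J : 𝓨 → 𝓧 → ℝ) : ℝ :=
  ∑ y, ((∑ x, (J y x * Real.log (J y x) - J y x * Real.log (Q x)))
    - (∑ x, J y x) * Real.log (∑ x, J y x))

/-- The real number `D(J‖Q∘P) + ρ·D(J‖T×Q)`, with `T` the `𝓨`-marginal of `J`, expanded so that
its dependence on `J` is through `t ↦ t log t` and linear terms. -/
noncomputable def pen {𝓧 𝓨 : Type*} [Fintype 𝓧] [Fintype 𝓨] (Q : 𝓧 → ℝ) (P : 𝓧 → 𝓨 → ℝ)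
    (ρ : ℝ) (J : 𝓨 → 𝓧 → ℝ) : ℝ :=
  ∑ y, ((∑ x, ((1 + ρ) * (J y x * Real.log (J y x))
      - J y x * ((1 + ρ) * Real.log (Q x) + Real.log (P x y))))
    + (-ρ) * ((∑ x, J y x) * Real.log (∑ x, J y x)))

/-- The real-valued cost `D(J‖Q∘P) + |R − D(J‖T×Q)|⁺`. -/
noncomputable def cost {𝓧 𝓨 : Type*} [Fintype 𝓧] [Fintype 𝓨] (Q : 𝓧 → ℝ) (P : 𝓧 → 𝓨 → ℝ)
    (R : ℝ) (J : 𝓨 → 𝓧 → ℝ) : ℝ :=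
  pen Q P 0 J + max (R - mutB Q J) 0

section Lagrangian

variable {𝓧 𝓨 : Type*} [Fintype 𝓧] [Fintype 𝓨] {P : 𝓧 → 𝓨 → ℝ} {Q : 𝓧 → ℝ}

lemma pen_eq_add (ρ : ℝ) (J : 𝓨 → 𝓧 → ℝ) :
    pen Q P ρ J = pen Q P 0 J + ρ * mutB Q J := by
  unfold pen mutB
  rw [Finset.mul_sum, ← Finset.sum_add_distrib]
  refine Finset.sum_congr rfl fun y _ => ?_
  rw [mul_sub, Finset.mul_sum]
  have : ∑ x, ((1 + ρ) * (J y x * Real.log (J y x))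
      - J y x * ((1 + ρ) * Real.log (Q x) + Real.log (P x y)))
      = ∑ x, ((1 + 0) * (J y x * Real.log (J y x))
      - J y x * ((1 + 0) * Real.log (Q x) + Real.log (P x y))) +
       ∑ x, ρ * (J y x * Real.log (J y x) - J y x * Real.log (Q x)) := by
    rw [← Finset.sum_add_distrib]
    exact Finset.sum_congr rfl fun x _ => by ring
  rw [this]
  ring

lemma lagrangian_le_cost {ρ : ℝ} (hρ : ρ ∈ Set.Icc (-1 : ℝ) 0) (R : ℝ) (J : 𝓨 → 𝓧 → ℝ) :
    pen Q P ρ J - ρ * R ≤ cost Q P R J := by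
  rw [pen_eq_add, cost]
  have h1 := le_max_left (R - mutB Q J) 0
  have h2 := le_max_right (R - mutB Q J) 0
  nlinarith [hρ.1, hρ.2]

/-- The maximum of the Lagrangian over `ρ` is attained at an endpoint of `[−1,0]`. -/
lemma cost_le {R c : ℝ} {J : 𝓨 → 𝓧 → ℝ} (h0 : pen Q P 0 J - 0 * R ≤ c)
    (h1 : pen Q P (-1) J - (-1) * R ≤ c) : cost Q P R J ≤ c := by
  rw [pen_eq_add] at h1
  rw [cost]
  rcases max_cases (R - mutB Q J) 0 with h | h <;> rw [h.1] <;> linarith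

lemma continuous_pen (ρ : ℝ) : Continuous (pen Q P ρ) := by
  unfold pen
  refine continuous_finsetSum _ fun y _ => ?_
  refine Continuous.add (continuous_finsetSum _ fun x _ => ?_) ?_
  · exact (continuous_const.mul (Real.continuous_mul_log.comp (by fun_prop))).sub (by fun_prop)
  · exact continuous_const.mul (Real.continuous_mul_log.comp (by fun_prop))

lemma convex_jointSet : Convex ℝ (jointSet Q P) := by
  intro J hJ K hK a b ha hb hab
  refine ⟨fun y x => ?_, ?_, fun y x h => ?_⟩
  · have := hJ.1 y x; have := hK.1 y x
    simp only [Pi.add_apply, Pi.smul_apply, smul_eq_mul]; positivity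
  · simp only [Pi.add_apply, Pi.smul_apply, smul_eq_mul, Finset.sum_add_distrib, ← Finset.mul_sum,
      hJ.2.1, hK.2.1]
    linarith
  · simp [hJ.2.2 y x h, hK.2.2 y x h]

lemma isCompact_jointSet : IsCompact (jointSet Q P) := by
  refine IsCompact.of_isClosed_subset (isCompact_Icc (a := (0 : 𝓨 → 𝓧 → ℝ)) (b := 1)) ?_ ?_
  · have e : jointSet Q P = (⋂ y, ⋂ x, {J : 𝓨 → 𝓧 → ℝ | 0 ≤ J y x}) ∩
        ({J | ∑ y, ∑ x, J y x = 1} ∩ ⋂ y, ⋂ x, ⋂ (_ : Q x * P x y = 0), {J | J y x = 0}) := by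
      ext J; simp [jointSet]
    rw [e]
    refine IsClosed.inter (isClosed_iInter fun y => isClosed_iInter fun x => ?_)
      (IsClosed.inter ?_ (isClosed_iInter fun y => isClosed_iInter fun x =>
        isClosed_iInter fun _ => ?_))
    · exact isClosed_le (by fun_prop) (by fun_prop)
    · exact isClosed_eq (by fun_prop) (by fun_prop)
    · exact isClosed_eq (by fun_prop) (by fun_prop)
  · intro J hJ
    refine ⟨fun y x => hJ.1 y x, fun y x => ?_⟩
    calc J y x ≤ ∑ x, J y x :=
          Finset.single_le_sum (f := fun x => J y x) (fun x _ => hJ.1 y x) (Finset.mem_univ x)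
      _ ≤ ∑ y, ∑ x, J y x :=
          Finset.single_le_sum (f := fun y => ∑ x, J y x)
            (fun y _ => Finset.sum_nonneg fun x _ => hJ.1 y x) (Finset.mem_univ y)
      _ = 1 := hJ.2.1

lemma convexOn_pen {ρ : ℝ} (hρ : ρ ∈ Set.Icc (-1 : ℝ) 0) :
    ConvexOn ℝ (jointSet Q P) (pen Q P ρ) := by
  refine ⟨convex_jointSet, fun J hJ K hK a b ha hb hab => ?_⟩
  have key : ∀ s t : ℝ, 0 ≤ s → 0 ≤ t →
      (a * s + b * t) * Real.log (a * s + b * t) ≤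
        a * (s * Real.log s) + b * (t * Real.log t) := fun s t hs ht => by
    simpa using Real.convexOn_mul_log.2 (Set.mem_Ici.2 hs) (Set.mem_Ici.2 ht) ha hb hab
  have h1 : 0 ≤ 1 + ρ := by linarith [hρ.1]
  have h2 : 0 ≤ -ρ := by linarith [hρ.2]
  simp only [smul_eq_mul]
  unfold pen
  rw [Finset.mul_sum, Finset.mul_sum, ← Finset.sum_add_distrib]
  refine Finset.sum_le_sum fun y _ => ?_
  simp only [Pi.add_apply, Pi.smul_apply, smul_eq_mul]
  have hT : ∑ x, (a * J y x + b * K y x) = a * ∑ x, J y x + b * ∑ x, K y x := by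
    rw [Finset.sum_add_distrib, Finset.mul_sum, Finset.mul_sum]
  have hTle := mul_le_mul_of_nonneg_left (key (∑ x, J y x) (∑ x, K y x)
    (Finset.sum_nonneg fun x _ => hJ.1 y x) (Finset.sum_nonneg fun x _ => hK.1 y x)) h2
  have hX : ∑ x, ((1 + ρ) * ((a * J y x + b * K y x) * Real.log (a * J y x + b * K y x))
      - (a * J y x + b * K y x) * ((1 + ρ) * Real.log (Q x) + Real.log (P x y)))
      ≤ a * ∑ x, ((1 + ρ) * (J y x * Real.log (J y x))
          - J y x * ((1 + ρ) * Real.log (Q x) + Real.log (P x y)))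
        + b * ∑ x, ((1 + ρ) * (K y x * Real.log (K y x))
          - K y x * ((1 + ρ) * Real.log (Q x) + Real.log (P x y))) := by
    rw [Finset.mul_sum, Finset.mul_sum, ← Finset.sum_add_distrib]
    refine Finset.sum_le_sum fun x _ => ?_
    have := mul_le_mul_of_nonneg_left (key (J y x) (K y x) (hJ.1 y x) (hK.1 y x)) h1
    linarith
  rw [hT]
  linarith

lemma jointSet_nonempty (hP : IsChannel P) (hQ : IsPMF Q) : (jointSet Q P).Nonempty := by
  refine ⟨fun y x => Q x * P x y, fun y x => mul_nonneg (hQ.1 x) ((hP x).1 y), ?_, fun y x h => h⟩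
  rw [Finset.sum_comm]
  simp [← Finset.mul_sum, (hP _).2, hQ.2]

lemma jointSet_pos (hP : IsChannel P) (hQ : IsPMF Q) {J : 𝓨 → 𝓧 → ℝ} (hJ : J ∈ jointSet Q P)
    {y : 𝓨} {x : 𝓧} (h : J y x ≠ 0) : 0 < J y x ∧ 0 < Q x ∧ 0 < P x y := by
  have h1 : Q x * P x y ≠ 0 := fun e => h (hJ.2.2 y x e)
  exact ⟨(hJ.1 y x).lt_of_ne' h, (hQ.1 x).lt_of_ne' (left_ne_zero_of_mul h1),
    ((hP x).1 y).lt_of_ne' (right_ne_zero_of_mul h1)⟩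

lemma exists_pos (hP : IsChannel P) (hQ : IsPMF Q) : ∃ x y, 0 < Q x ∧ 0 < P x y := by
  obtain ⟨x, -, hx⟩ : ∃ x ∈ Finset.univ, 0 < Q x := by
    by_contra! h
    have := Finset.sum_nonpos h
    rw [hQ.2] at this
    linarith
  obtain ⟨y, -, hy⟩ : ∃ y ∈ Finset.univ, 0 < P x y := by
    by_contra! h
    have := Finset.sum_nonpos h
    rw [(hP x).2] at this
    linarith
  exact ⟨x, y, hx, hy⟩

end Lagrangian

/-! ### Minimizing the Lagrangian for `ρ > −1` -/

/-- The weight `Q(x) P(y|x)^{1/(1+ρ)}`, to which `V_ρ(x|y)` is proportional in `x`. -/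
noncomputable def wt {𝓧 𝓨 : Type*} (ρ : ℝ) (Q : 𝓧 → ℝ) (P : 𝓧 → 𝓨 → ℝ) (y : 𝓨) (x : 𝓧) : ℝ :=
  Q x * P x y ^ (1 / (1 + ρ))

/-- The sum over `x` of the weights `wt`. -/
noncomputable def wsum {𝓧 𝓨 : Type*} [Fintype 𝓧] (ρ : ℝ) (Q : 𝓧 → ℝ) (P : 𝓧 → 𝓨 → ℝ)
    (y : 𝓨) : ℝ := ∑ x, wt ρ Q P y x

/-- The normalization `∑_y (∑_x Q(x) P(y|x)^{1/(1+ρ)})^{1+ρ} = exp (−E₀(ρ))`. -/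
noncomputable def wnorm {𝓧 𝓨 : Type*} [Fintype 𝓧] [Fintype 𝓨] (ρ : ℝ) (Q : 𝓧 → ℝ)
    (P : 𝓧 → 𝓨 → ℝ) : ℝ := ∑ y, wsum ρ Q P y ^ (1 + ρ)

section Interior

variable {𝓧 𝓨 : Type*} [Fintype 𝓧] [Fintype 𝓨] {P : 𝓧 → 𝓨 → ℝ} {Q : 𝓧 → ℝ} {ρ : ℝ}

lemma Jrho_eq (x : 𝓧) (y : 𝓨) :
    Jrho ρ Q P x y = wt ρ Q P y x * wsum ρ Q P y ^ ρ / wnorm ρ Q P := rfl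

lemma wt_nonneg (hP : IsChannel P) (hQ : IsPMF Q) (y : 𝓨) (x : 𝓧) : 0 ≤ wt ρ Q P y x :=
  mul_nonneg (hQ.1 x) (Real.rpow_nonneg ((hP x).1 y) _)

lemma wt_pos {y : 𝓨} {x : 𝓧} (hx : 0 < Q x) (hy : 0 < P x y) : 0 < wt ρ Q P y x :=
  mul_pos hx (Real.rpow_pos_of_pos hy _)

lemma wsum_nonneg (hP : IsChannel P) (hQ : IsPMF Q) (y : 𝓨) : 0 ≤ wsum ρ Q P y :=
  Finset.sum_nonneg fun x _ => wt_nonneg hP hQ y x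

lemma wt_le_wsum (hP : IsChannel P) (hQ : IsPMF Q) (y : 𝓨) (x : 𝓧) :
    wt ρ Q P y x ≤ wsum ρ Q P y :=
  Finset.single_le_sum (f := wt ρ Q P y) (fun x _ => wt_nonneg hP hQ y x) (Finset.mem_univ x)

lemma wnorm_pos (hP : IsChannel P) (hQ : IsPMF Q) : 0 < wnorm ρ Q P := by
  obtain ⟨x, y, hx, hy⟩ := exists_pos hP hQ
  refine Finset.sum_pos' (fun y _ => Real.rpow_nonneg (wsum_nonneg hP hQ y) _)
    ⟨y, Finset.mem_univ y, Real.rpow_pos_of_pos ((wt_pos hx hy).trans_le (wt_le_wsum hP hQ y x)) _⟩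

lemma marginal_pos {J : 𝓨 → 𝓧 → ℝ} (hJ : J ∈ jointSet Q P) {y : 𝓨} {x : 𝓧} (h : 0 < J y x) :
    0 < ∑ x, J y x :=
  h.trans_le (Finset.single_le_sum (f := J y) (fun x _ => hJ.1 y x) (Finset.mem_univ x))

lemma exists_of_marginal_ne {J : 𝓨 → 𝓧 → ℝ} {y : 𝓨} (h : ∑ x, J y x ≠ 0) : ∃ x, J y x ≠ 0 := by
  obtain ⟨x, -, hx⟩ := Finset.exists_ne_zero_of_sum_ne_zero h
  exact ⟨x, hx⟩

/-- The Lagrangian exceeds `E₀(ρ)` by exactly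
`(1+ρ)·∑_y D(J(·,y) ‖ T(y)V_ρ(·|y)) + D(T‖T_ρ)`. -/
lemma pen_eq (hP : IsChannel P) (hQ : IsPMF Q) (hρ : -1 < ρ) {J : 𝓨 → 𝓧 → ℝ}
    (hJ : J ∈ jointSet Q P) :
    pen Q P ρ J = E0 ρ Q P
      + (1 + ρ) * ∑ y, relEnt (J y) (fun x => (∑ x, J y x) * wt ρ Q P y x / wsum ρ Q P y)
      + relEnt (fun y => ∑ x, J y x) (fun y => wsum ρ Q P y ^ (1 + ρ) / wnorm ρ Q P) := by
  have hα : 0 < 1 + ρ := by linarith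
  have hZ : 0 < wnorm ρ Q P := wnorm_pos hP hQ
  have hE : E0 ρ Q P = ∑ y, -((∑ x, J y x) * Real.log (wnorm ρ Q P)) := by
    rw [Finset.sum_neg_distrib, ← Finset.sum_mul, hJ.2.1, one_mul]
    rfl
  rw [hE, Finset.mul_sum]
  unfold relEnt pen
  rw [← Finset.sum_add_distrib, ← Finset.sum_add_distrib]
  refine Finset.sum_congr rfl fun y _ => ?_
  set T := ∑ x, J y x with hT
  set S := wsum ρ Q P y with hS
  have hx : ∑ x, ((1 + ρ) * (J y x * Real.log (J y x))
      - J y x * ((1 + ρ) * Real.log (Q x) + Real.log (P x y)))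
      = (1 + ρ) * ∑ x, J y x * (Real.log (J y x) - Real.log (T * wt ρ Q P y x / S))
        + T * ((1 + ρ) * Real.log T - (1 + ρ) * Real.log S) := by
    rw [Finset.mul_sum, hT, Finset.sum_mul, ← Finset.sum_add_distrib, ← hT]
    refine Finset.sum_congr rfl fun x _ => ?_
    by_cases h : J y x = 0
    · simp [h]
    obtain ⟨hJp, hQp, hPp⟩ := jointSet_pos hP hQ hJ h
    have hTp : 0 < T := marginal_pos hJ hJp
    have hWp : 0 < wt ρ Q P y x := wt_pos hQp hPp
    have hSp : 0 < S := hWp.trans_le (wt_le_wsum hP hQ y x)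
    rw [Real.log_div (by positivity) hSp.ne', Real.log_mul hTp.ne' hWp.ne', wt,
      Real.log_mul hQp.ne' (Real.rpow_pos_of_pos hPp _).ne', Real.log_rpow hPp]
    field_simp
    ring
  have hTT : T * (Real.log T - Real.log (S ^ (1 + ρ) / wnorm ρ Q P))
      = T * (Real.log T - (1 + ρ) * Real.log S + Real.log (wnorm ρ Q P)) := by
    by_cases h : T = 0
    · simp [h]
    obtain ⟨x, hx⟩ := exists_of_marginal_ne h
    obtain ⟨hJp, hQp, hPp⟩ := jointSet_pos hP hQ hJ hx
    have hSp : 0 < S := (wt_pos hQp hPp).trans_le (wt_le_wsum hP hQ y x)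
    rw [Real.log_div (Real.rpow_pos_of_pos hSp _).ne' hZ.ne', Real.log_rpow hSp]
    ring
  simp only [] at hTT ⊢
  rw [hx, hTT]
  ring

/-- The hypotheses of Gibbs' inequality for the two relative entropies in `pen_eq`. -/
lemma gibbs_hyps (hP : IsChannel P) (hQ : IsPMF Q) {J : 𝓨 → 𝓧 → ℝ} (hJ : J ∈ jointSet Q P) :
    (∀ y, (∀ x, 0 ≤ (∑ x, J y x) * wt ρ Q P y x / wsum ρ Q P y) ∧
      (∀ x, (∑ x, J y x) * wt ρ Q P y x / wsum ρ Q P y = 0 → J y x = 0) ∧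
      ∑ x, J y x = ∑ x, (∑ x, J y x) * wt ρ Q P y x / wsum ρ Q P y) ∧
    (∀ y, 0 ≤ ∑ x, J y x) ∧
    (∀ y, 0 ≤ wsum ρ Q P y ^ (1 + ρ) / wnorm ρ Q P) ∧
    (∀ y, wsum ρ Q P y ^ (1 + ρ) / wnorm ρ Q P = 0 → ∑ x, J y x = 0) ∧
    ∑ y, ∑ x, J y x = ∑ y, wsum ρ Q P y ^ (1 + ρ) / wnorm ρ Q P := by
  have hZ : 0 < wnorm ρ Q P := wnorm_pos hP hQ
  have hT : ∀ y, 0 ≤ ∑ x, J y x := fun y => Finset.sum_nonneg fun x _ => hJ.1 y x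
  refine ⟨fun y => ⟨fun x => ?_, fun x h => ?_, ?_⟩, hT, fun y => ?_, fun y h => ?_, ?_⟩
  · exact div_nonneg (mul_nonneg (hT y) (wt_nonneg hP hQ y x)) (wsum_nonneg hP hQ y)
  · by_contra hne
    obtain ⟨hJp, hQp, hPp⟩ := jointSet_pos hP hQ hJ hne
    have hW : 0 < wt ρ Q P y x := wt_pos hQp hPp
    have hS := hW.trans_le (wt_le_wsum hP hQ y x)
    have := marginal_pos hJ hJp
    exact absurd h (by positivity)
  · rw [← Finset.sum_div, ← Finset.mul_sum]
    change _ = _ * wsum ρ Q P y / _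
    by_cases h : ∑ x, J y x = 0
    · simp [h]
    obtain ⟨x, hx⟩ := exists_of_marginal_ne h
    obtain ⟨hJp, hQp, hPp⟩ := jointSet_pos hP hQ hJ hx
    have hS : 0 < wsum ρ Q P y := (wt_pos hQp hPp).trans_le (wt_le_wsum hP hQ y x)
    field_simp
  · exact div_nonneg (Real.rpow_nonneg (wsum_nonneg hP hQ y) _) hZ.le
  · by_contra hne
    obtain ⟨x, hx⟩ := exists_of_marginal_ne hne
    obtain ⟨hJp, hQp, hPp⟩ := jointSet_pos hP hQ hJ hx
    have hS : 0 < wsum ρ Q P y := (wt_pos hQp hPp).trans_le (wt_le_wsum hP hQ y x)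
    exact absurd h (div_pos (Real.rpow_pos_of_pos hS _) hZ).ne'
  · rw [hJ.2.1, ← Finset.sum_div]
    exact (div_self hZ.ne').symm

lemma E0_le_pen (hP : IsChannel P) (hQ : IsPMF Q) (hρ : -1 < ρ) {J : 𝓨 → 𝓧 → ℝ}
    (hJ : J ∈ jointSet Q P) : E0 ρ Q P ≤ pen Q P ρ J := by
  obtain ⟨h1, h2, h3, h4, h5⟩ := gibbs_hyps (ρ := ρ) hP hQ hJ
  rw [pen_eq hP hQ hρ hJ, add_assoc]
  have hα : 0 ≤ 1 + ρ := by linarith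
  exact le_add_of_nonneg_right (add_nonneg (mul_nonneg hα (Finset.sum_nonneg fun y _ =>
    relEnt_nonneg (hJ.1 y) (h1 y).1 (h1 y).2.1 (h1 y).2.2)) (relEnt_nonneg h2 h3 h4 h5))

lemma wt_mul_wsum_div (hP : IsChannel P) (hQ : IsPMF Q) (y : 𝓨) (x : 𝓧) :
    wsum ρ Q P y ^ (1 + ρ) / wnorm ρ Q P * wt ρ Q P y x / wsum ρ Q P y = Jrho ρ Q P x y := by
  rw [Jrho_eq]
  rcases (wsum_nonneg (ρ := ρ) hP hQ y).eq_or_lt with h | h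
  · have h0 : wt ρ Q P y x = 0 :=
      le_antisymm (h ▸ wt_le_wsum hP hQ y x) (wt_nonneg hP hQ y x)
    simp [h0]
  · rw [Real.rpow_add h, Real.rpow_one]
    field_simp

lemma eq_Jrho (hP : IsChannel P) (hQ : IsPMF Q) (hρ : -1 < ρ) {J : 𝓨 → 𝓧 → ℝ}
    (hJ : J ∈ jointSet Q P) (h : pen Q P ρ J ≤ E0 ρ Q P) (x : 𝓧) (y : 𝓨) :
    J y x = Jrho ρ Q P x y := by
  obtain ⟨h1, h2, h3, h4, h5⟩ := gibbs_hyps (ρ := ρ) hP hQ hJ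
  rw [pen_eq hP hQ hρ hJ] at h
  have hα : 0 < 1 + ρ := by linarith
  have hG : ∀ y ∈ Finset.univ, 0 ≤ relEnt (J y)
      (fun x => (∑ x, J y x) * wt ρ Q P y x / wsum ρ Q P y) := fun y _ =>
    relEnt_nonneg (hJ.1 y) (h1 y).1 (h1 y).2.1 (h1 y).2.2
  have hH := relEnt_nonneg h2 h3 h4 h5
  have hG' := Finset.sum_nonneg hG
  have hαG := mul_nonneg hα.le hG'
  have hH0 := relEnt_eq_zero h2 h3 h4 h5 (by linarith)
  have hG0 := (Finset.sum_eq_zero_iff_of_nonneg hG).1 (by nlinarith) y (Finset.mem_univ y)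
  have e1 := congrFun (relEnt_eq_zero (hJ.1 y) (h1 y).1 (h1 y).2.1 (h1 y).2.2 hG0) x
  have e2 := congrFun hH0 y
  rw [e1, e2, wt_mul_wsum_div hP hQ]

lemma sum_Jrho (hP : IsChannel P) (hQ : IsPMF Q) (hρ : -1 < ρ) (y : 𝓨) :
    ∑ x, Jrho ρ Q P x y = wsum ρ Q P y ^ (1 + ρ) / wnorm ρ Q P := by
  simp_rw [Jrho_eq]
  rw [← Finset.sum_div, ← Finset.sum_mul]
  change wsum ρ Q P y * _ / _ = _
  rcases (wsum_nonneg (ρ := ρ) hP hQ y).eq_or_lt with h | h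
  · have h1 : 1 + ρ ≠ 0 := by linarith
    rw [← h, Real.zero_rpow h1, zero_mul]
  · rw [Real.rpow_add h, Real.rpow_one]

lemma Jrho_mem (hP : IsChannel P) (hQ : IsPMF Q) (hρ : -1 < ρ) :
    (fun y x => Jrho ρ Q P x y) ∈ jointSet Q P := by
  have hZ : 0 < wnorm ρ Q P := wnorm_pos hP hQ
  refine ⟨fun y x => ?_, ?_, fun y x h => ?_⟩
  · simp only [Jrho_eq]
    exact div_nonneg (mul_nonneg (wt_nonneg hP hQ y x)
      (Real.rpow_nonneg (wsum_nonneg hP hQ y) _)) hZ.le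
  · simp_rw [sum_Jrho hP hQ hρ]
    rw [← Finset.sum_div]
    exact div_self hZ.ne'
  · have : wt ρ Q P y x = 0 := by
      rcases mul_eq_zero.1 h with h | h
      · simp [wt, h]
      · have : (1 : ℝ) / (1 + ρ) ≠ 0 := by
          have : 0 < 1 + ρ := by linarith
          positivity
        rw [wt, h, Real.zero_rpow this, mul_zero]
    simp [Jrho_eq, this]

lemma pen_Jrho (hP : IsChannel P) (hQ : IsPMF Q) (hρ : -1 < ρ) :
    pen Q P ρ (fun y x => Jrho ρ Q P x y) = E0 ρ Q P := by
  rw [pen_eq hP hQ hρ (Jrho_mem hP hQ hρ)]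
  simp only [sum_Jrho hP hQ hρ, wt_mul_wsum_div hP hQ, relEnt_self]
  simp

end Interior

/-! ### Minimizing the Lagrangian for `ρ = −1` -/

section Endpoint

variable {𝓧 𝓨 : Type*} [Fintype 𝓧] [Fintype 𝓨] {P : 𝓧 → 𝓨 → ℝ} {Q : 𝓧 → ℝ}

lemma le_maxP {x : 𝓧} (hx : 0 < Q x) (y : 𝓨) : P x y ≤ maxP Q P y :=
  le_ciSup (f := fun x : {x // 0 < Q x} => P x.1 y) (Set.finite_range _).bddAbove ⟨x, hx⟩

lemma exists_eq_maxP (hP : IsChannel P) (hQ : IsPMF Q) (y : 𝓨) :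
    ∃ x, 0 < Q x ∧ P x y = maxP Q P y := by
  obtain ⟨x, _, hx, _⟩ := exists_pos hP hQ
  have : Nonempty {x // 0 < Q x} := ⟨⟨x, hx⟩⟩
  obtain ⟨i, hi⟩ := exists_eq_ciSup_of_finite (f := fun x : {x // 0 < Q x} => P x.1 y)
  exact ⟨i.1, i.2, hi⟩

lemma maxP_nonneg (hP : IsChannel P) (hQ : IsPMF Q) (y : 𝓨) : 0 ≤ maxP Q P y := by
  obtain ⟨x, _, h⟩ := exists_eq_maxP hP hQ y
  exact h ▸ (hP x).1 y

lemma sum_maxP_pos (hP : IsChannel P) (hQ : IsPMF Q) : 0 < ∑ y, maxP Q P y := by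
  obtain ⟨x, y, hx, hy⟩ := exists_pos hP hQ
  exact Finset.sum_pos' (fun y _ => maxP_nonneg hP hQ y)
    ⟨y, Finset.mem_univ y, hy.trans_le (le_maxP hx y)⟩

lemma isArgmax_iff (hP : IsChannel P) (hQ : IsPMF Q) (x : 𝓧) (y : 𝓨) :
    (0 < Q x ∧ ∀ a, 0 < Q a → P a y ≤ P x y) ↔ 0 < Q x ∧ P x y = maxP Q P y := by
  constructor
  · rintro ⟨hx, h⟩
    obtain ⟨a, ha, e⟩ := exists_eq_maxP hP hQ y
    exact ⟨hx, le_antisymm (le_maxP hx y) (e ▸ h a ha)⟩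
  · rintro ⟨hx, e⟩
    exact ⟨hx, fun a ha => e ▸ le_maxP ha y⟩

lemma isPMF_Tm1 (hP : IsChannel P) (hQ : IsPMF Q) : IsPMF (Tm1 Q P) := by
  refine ⟨fun y => div_nonneg (maxP_nonneg hP hQ y) (sum_maxP_pos hP hQ).le, ?_⟩
  unfold Tm1
  rw [← Finset.sum_div]
  exact div_self (sum_maxP_pos hP hQ).ne'

/-- The Lagrangian at `ρ = −1` exceeds `E₀(−1)` by exactly
`D(T‖T_{−1}) + ∑ J·(log max P − log P)`. -/
lemma pen_neg_one_eq (hP : IsChannel P) (hQ : IsPMF Q) {J : 𝓨 → 𝓧 → ℝ}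
    (hJ : J ∈ jointSet Q P) :
    pen Q P (-1) J = E0m1 Q P + relEnt (fun y => ∑ x, J y x) (Tm1 Q P)
      + ∑ y, ∑ x, J y x * (Real.log (maxP Q P y) - Real.log (P x y)) := by
  have hZ := sum_maxP_pos hP hQ
  have hE : E0m1 Q P = ∑ y, -((∑ x, J y x) * Real.log (∑ y, maxP Q P y)) := by
    rw [Finset.sum_neg_distrib, ← Finset.sum_mul, hJ.2.1, one_mul]
    rfl
  rw [hE]
  unfold relEnt pen
  rw [← Finset.sum_add_distrib, ← Finset.sum_add_distrib]
  refine Finset.sum_congr rfl fun y _ => ?_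
  set T := ∑ x, J y x with hT
  have hTT : T * (Real.log T - Real.log (Tm1 Q P y))
      = T * (Real.log T - Real.log (maxP Q P y) + Real.log (∑ y, maxP Q P y)) := by
    by_cases h : T = 0
    · simp [h]
    obtain ⟨x, hx⟩ := exists_of_marginal_ne h
    obtain ⟨hJp, hQp, hPp⟩ := jointSet_pos hP hQ hJ hx
    rw [Tm1, Real.log_div (hPp.trans_le (le_maxP hQp y)).ne' hZ.ne']
    ring
  have hx : ∑ x, ((1 + -1) * (J y x * Real.log (J y x))
      - J y x * ((1 + -1) * Real.log (Q x) + Real.log (P x y)))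
      = ∑ x, J y x * (Real.log (maxP Q P y) - Real.log (P x y))
        - T * Real.log (maxP Q P y) := by
    rw [hT, Finset.sum_mul, ← Finset.sum_sub_distrib]
    exact Finset.sum_congr rfl fun x _ => by ring
  simp only [] at hTT ⊢
  rw [hx, hTT]
  ring

lemma mul_log_maxP_sub_nonneg (hP : IsChannel P) (hQ : IsPMF Q) {J : 𝓨 → 𝓧 → ℝ}
    (hJ : J ∈ jointSet Q P) (y : 𝓨) (x : 𝓧) :
    0 ≤ J y x * (Real.log (maxP Q P y) - Real.log (P x y)) := by
  by_cases h : J y x = 0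
  · simp [h]
  obtain ⟨hJp, hQp, hPp⟩ := jointSet_pos hP hQ hJ h
  exact mul_nonneg hJp.le (sub_nonneg.2 (Real.log_le_log hPp (le_maxP hQp y)))

lemma gibbs_hyps_neg_one (hP : IsChannel P) (hQ : IsPMF Q) {J : 𝓨 → 𝓧 → ℝ}
    (hJ : J ∈ jointSet Q P) :
    (∀ y, 0 ≤ ∑ x, J y x) ∧ (∀ y, 0 ≤ Tm1 Q P y) ∧ (∀ y, Tm1 Q P y = 0 → ∑ x, J y x = 0) ∧
    ∑ y, ∑ x, J y x = ∑ y, Tm1 Q P y := by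
  refine ⟨fun y => Finset.sum_nonneg fun x _ => hJ.1 y x, (isPMF_Tm1 hP hQ).1, fun y h => ?_,
    by rw [hJ.2.1, (isPMF_Tm1 hP hQ).2]⟩
  by_contra hne
  obtain ⟨x, hx⟩ := exists_of_marginal_ne hne
  obtain ⟨hJp, hQp, hPp⟩ := jointSet_pos hP hQ hJ hx
  exact absurd h (div_pos (hPp.trans_le (le_maxP hQp y)) (sum_maxP_pos hP hQ)).ne'

lemma E0m1_le_pen (hP : IsChannel P) (hQ : IsPMF Q) {J : 𝓨 → 𝓧 → ℝ}
    (hJ : J ∈ jointSet Q P) : E0m1 Q P ≤ pen Q P (-1) J := by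
  obtain ⟨h1, h2, h3, h4⟩ := gibbs_hyps_neg_one hP hQ hJ
  rw [pen_neg_one_eq hP hQ hJ, add_assoc]
  exact le_add_of_nonneg_right (add_nonneg (relEnt_nonneg h1 h2 h3 h4)
    (Finset.sum_nonneg fun y _ => Finset.sum_nonneg fun x _ =>
      mul_log_maxP_sub_nonneg hP hQ hJ y x))

/-- A minimizer of the Lagrangian at `ρ = −1` has `𝓨`-marginal `T_{−1}` and only charges the
maximizers of `P(y|·)` on the support of `Q`. -/
lemma minimizer_neg_one (hP : IsChannel P) (hQ : IsPMF Q) {J : 𝓨 → 𝓧 → ℝ}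
    (hJ : J ∈ jointSet Q P) (h : pen Q P (-1) J ≤ E0m1 Q P) :
    (∀ y, ∑ x, J y x = Tm1 Q P y) ∧ ∀ y x, J y x ≠ 0 → 0 < Q x ∧ P x y = maxP Q P y := by
  obtain ⟨h1, h2, h3, h4⟩ := gibbs_hyps_neg_one hP hQ hJ
  rw [pen_neg_one_eq hP hQ hJ] at h
  have hH := relEnt_nonneg h1 h2 h3 h4
  have hx : ∀ y ∈ Finset.univ, 0 ≤ ∑ x, J y x * (Real.log (maxP Q P y) - Real.log (P x y)) :=
    fun y _ => Finset.sum_nonneg fun x _ => mul_log_maxP_sub_nonneg hP hQ hJ y x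
  have hxs := Finset.sum_nonneg hx
  refine ⟨fun y => congrFun (relEnt_eq_zero h1 h2 h3 h4 (by linarith)) y, fun y x hne => ?_⟩
  obtain ⟨hJp, hQp, hPp⟩ := jointSet_pos hP hQ hJ hne
  have e1 := (Finset.sum_eq_zero_iff_of_nonneg hx).1 (by linarith) y (Finset.mem_univ y)
  have e2 := (Finset.sum_eq_zero_iff_of_nonneg
    (fun x _ => mul_log_maxP_sub_nonneg hP hQ hJ y x)).1 e1 x (Finset.mem_univ x)
  have e3 := (mul_eq_zero.1 e2).resolve_left hne
  exact ⟨hQp, Real.log_injOn_pos (Set.mem_Ioi.2 hPp)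
    (Set.mem_Ioi.2 (hPp.trans_le (le_maxP hQp y))) (by linarith)⟩

/-- Conversely, every `T_{−1}∘V` with `V` admissible minimizes the Lagrangian at `ρ = −1`. -/
lemma admissible_minimizes (hP : IsChannel P) (hQ : IsPMF Q) {V : 𝓨 → 𝓧 → ℝ}
    (hV : IsCondPMF V) (hA : AdmissibleAtM1 Q P V) :
    (fun y x => Tm1 Q P y * V y x) ∈ jointSet Q P ∧
      pen Q P (-1) (fun y x => Tm1 Q P y * V y x) = E0m1 Q P := by
  have hT := isPMF_Tm1 hP hQ
  have hA' : ∀ y x, V y x ≠ 0 → 0 < Q x ∧ P x y = maxP Q P y := fun y x h => by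
    by_contra hn
    exact h (hA y x (by rwa [isArgmax_iff hP hQ]))
  have hs : ∀ y, ∑ x, Tm1 Q P y * V y x = Tm1 Q P y := fun y => by
    rw [← Finset.mul_sum, (hV y).2, mul_one]
  have hmem : (fun y x => Tm1 Q P y * V y x) ∈ jointSet Q P := by
    refine ⟨fun y x => mul_nonneg (hT.1 y) ((hV y).1 x), ?_, fun y x h => ?_⟩
    · simp_rw [hs]; exact hT.2
    · by_cases hv : V y x = 0
      · simp [hv]
      obtain ⟨h1, h2⟩ := hA' y x hv
      have h3 : maxP Q P y = 0 := h2 ▸ (mul_eq_zero.1 h).resolve_left h1.ne'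
      simp [Tm1, h3]
  refine ⟨hmem, ?_⟩
  rw [pen_neg_one_eq hP hQ hmem]
  simp only [hs, relEnt_self]
  rw [Finset.sum_eq_zero, add_zero, add_zero]
  intro y _
  refine Finset.sum_eq_zero fun x _ => ?_
  by_cases hv : V y x = 0
  · simp [hv]
  · rw [(hA' y x hv).2]; simp

/-- A point mass at some maximizer of `P(y|·)` on the support of `Q`. -/
lemma exists_argmax_pmf (hP : IsChannel P) (hQ : IsPMF Q) (y : 𝓨) :
    ∃ v : 𝓧 → ℝ, IsPMF v ∧ ∀ x, ¬ (0 < Q x ∧ ∀ a, 0 < Q a → P a y ≤ P x y) → v x = 0 := by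
  classical
  obtain ⟨x₀, h⟩ := exists_eq_maxP hP hQ y
  refine ⟨Pi.single x₀ 1, ⟨fun x => ?_, by simp⟩, fun x hx => ?_⟩
  · by_cases e : x = x₀
    · subst e; simp
    · simp [e]
  · have : x ≠ x₀ := by
      rintro rfl
      exact hx ((isArgmax_iff hP hQ _ y).2 h)
    simp [this]

end Endpoint

/-! ### Strong duality -/

section Duality

variable {𝓧 𝓨 : Type*} [Fintype 𝓧] [Fintype 𝓨] {P : 𝓧 → 𝓨 → ℝ} {Q : 𝓧 → ℝ} {ρ : ℝ}

lemma E0full_of_lt (hρ : -1 < ρ) : E0full ρ Q P = E0 ρ Q P := if_neg hρ.ne'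

lemma E0full_neg_one : E0full (-1) Q P = E0m1 Q P := if_pos rfl

lemma E0full_le_pen (hP : IsChannel P) (hQ : IsPMF Q) (hρ : ρ ∈ Set.Icc (-1 : ℝ) 0)
    {J : 𝓨 → 𝓧 → ℝ} (hJ : J ∈ jointSet Q P) : E0full ρ Q P ≤ pen Q P ρ J := by
  rcases hρ.1.eq_or_lt with rfl | h
  · rw [E0full_neg_one]; exact E0m1_le_pen hP hQ hJ
  · rw [E0full_of_lt h]; exact E0_le_pen hP hQ h hJ

lemma exists_pen_eq_E0full (hP : IsChannel P) (hQ : IsPMF Q) (hρ : ρ ∈ Set.Icc (-1 : ℝ) 0) :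
    ∃ J ∈ jointSet Q P, pen Q P ρ J = E0full ρ Q P := by
  rcases hρ.1.eq_or_lt with rfl | h
  · choose V hV hA using exists_argmax_pmf hP hQ
    have := admissible_minimizes hP hQ hV hA
    exact ⟨_, this.1, by rw [this.2, E0full_neg_one]⟩
  · exact ⟨_, Jrho_mem hP hQ h, by rw [pen_Jrho hP hQ h, E0full_of_lt h]⟩

/-- A saddle point of the Lagrangian yields a joint distribution whose cost is the dual maximum. -/
lemma strong_duality (hP : IsChannel P) (hQ : IsPMF Q) (R : ℝ) :
    ∃ J ∈ jointSet Q P,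
      IsGreatest {e : ℝ | ∃ ρ ∈ Set.Icc (-1 : ℝ) 0, e = E0full ρ Q P - ρ * R} (cost Q P R J) := by
  have haff : ∀ J : 𝓨 → 𝓧 → ℝ, (fun ρ => pen Q P ρ J - ρ * R)
      = fun ρ => pen Q P 0 J + ρ * (mutB Q J - R) := fun J => by
    funext ρ; rw [pen_eq_add]; ring
  obtain ⟨J, hJ, ρ, hρ, hs⟩ := Sion.exists_isSaddlePointOn (X := jointSet Q P)
    (Y := Set.Icc (-1 : ℝ) 0) (f := fun J ρ => pen Q P ρ J - ρ * R)
    (jointSet_nonempty hP hQ) convex_jointSet isCompact_jointSet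
    (fun ρ _ => ((continuous_pen ρ).sub continuous_const).lowerSemicontinuous.lowerSemicontinuousOn
      _)
    (fun ρ hρ => by
      have := ((convexOn_pen (Q := Q) (P := P) hρ).add_const (-(ρ * R))).quasiconvexOn
      simp only [sub_eq_add_neg]
      exact this)
    (convex_Icc _ _) ⟨0, by simp⟩ isCompact_Icc
    (fun J _ => by
      have : Continuous (fun ρ => pen Q P ρ J - ρ * R) := by rw [haff]; fun_prop
      exact this.upperSemicontinuous.upperSemicontinuousOn _)
    (fun J _ => by
      rw [haff]
      refine ConcaveOn.quasiconcaveOn ⟨convex_Icc _ _, fun s _ t _ a b _ _ hab => le_of_eq ?_⟩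
      simp only [smul_eq_mul]
      linear_combination (pen Q P 0 J) * hab)
  have weak : ∀ ρ ∈ Set.Icc (-1 : ℝ) 0, E0full ρ Q P - ρ * R ≤ cost Q P R J := fun ρ hρ =>
    (sub_le_sub_right (E0full_le_pen hP hQ hρ hJ) _).trans (lagrangian_le_cost hρ R J)
  obtain ⟨K, hK, hKe⟩ := exists_pen_eq_E0full hP hQ hρ
  have hle : cost Q P R J ≤ E0full ρ Q P - ρ * R := by
    rw [← hKe]
    exact cost_le (hs K hK 0 (by simp)) (hs K hK (-1) (by simp))
  refine ⟨J, hJ, ⟨ρ, hρ, le_antisymm hle (weak ρ hρ)⟩, ?_⟩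
  rintro e ⟨ρ', hρ', rfl⟩
  exact weak ρ' hρ'

end Duality

/-! ### From extended-real divergences to real sums -/

section Extended

variable {𝓧 𝓨 : Type*} [Fintype 𝓧] [Fintype 𝓨] {P : 𝓧 → 𝓨 → ℝ} {Q : 𝓧 → ℝ}

lemma ereal_sum_coe {ι : Type*} (s : Finset ι) (f : ι → ℝ) :
    ∑ i ∈ s, (f i : EReal) = ((∑ i ∈ s, f i : ℝ) : EReal) := by
  classical
  induction s using Finset.induction_on with
  | empty => simp
  | insert a s ha ih => rw [Finset.sum_insert ha, Finset.sum_insert ha, ih, EReal.coe_add]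

lemma ereal_sum_ne_bot {ι : Type*} (s : Finset ι) (f : ι → EReal) (h : ∀ i, f i ≠ ⊥) :
    ∑ i ∈ s, f i ≠ ⊥ := by
  classical
  induction s using Finset.induction_on with
  | empty => simp
  | insert a s ha ih => rw [Finset.sum_insert ha]; exact EReal.add_ne_bot_iff.2 ⟨h a, ih⟩

lemma ereal_sum_eq_top {ι : Type*} [Fintype ι] (f : ι → EReal) (h : ∀ i, f i ≠ ⊥) (i : ι)
    (hi : f i = ⊤) : ∑ i, f i = ⊤ := by
  classical
  rw [← Finset.add_sum_erase _ _ (Finset.mem_univ i), hi]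
  exact EReal.top_add_of_ne_bot (ereal_sum_ne_bot _ _ h)

lemma klTerm_ne_bot (s t : ℝ) : klTerm s t ≠ ⊥ := by
  unfold klTerm
  split_ifs
  · simp
  · simp
  · exact EReal.coe_ne_bot _

lemma klTerm_of_ac {s t : ℝ} (h : t = 0 → s = 0) :
    klTerm s t = ((s * (Real.log s - Real.log t) : ℝ) : EReal) := by
  unfold klTerm
  split_ifs with h1 h2
  · simp [h1]
  · exact absurd (h h2) h1
  · rw [Real.log_div h1 h2]

lemma marginal_mul {T : 𝓨 → ℝ} {V : 𝓨 → 𝓧 → ℝ} (hV : IsCondPMF V) (y : 𝓨) :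
    ∑ x, T y * V y x = T y := by rw [← Finset.mul_sum, (hV y).2, mul_one]

lemma DQP_eq_coe (hP : IsChannel P) (hQ : IsPMF Q) {T : 𝓨 → ℝ} {V : 𝓨 → 𝓧 → ℝ}
    (hJ : (fun y x => T y * V y x) ∈ jointSet Q P) :
    DQP T V Q P = ((pen Q P 0 (fun y x => T y * V y x) : ℝ) : EReal) := by
  unfold DQP pen
  rw [← ereal_sum_coe]
  refine Finset.sum_congr rfl fun y _ => ?_
  rw [neg_zero, zero_mul, add_zero, ← ereal_sum_coe]
  refine Finset.sum_congr rfl fun x _ => ?_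
  rw [klTerm_of_ac (hJ.2.2 y x)]
  congr 1
  by_cases h : T y * V y x = 0
  · simp [h]
  obtain ⟨-, hQp, hPp⟩ := jointSet_pos hP hQ hJ (y := y) (x := x) h
  rw [Real.log_mul hQp.ne' hPp.ne']
  ring

lemma DTQ_eq_coe (hP : IsChannel P) (hQ : IsPMF Q) {T : 𝓨 → ℝ} {V : 𝓨 → 𝓧 → ℝ}
    (hV : IsCondPMF V) (hJ : (fun y x => T y * V y x) ∈ jointSet Q P) :
    DTQ T V Q = ((mutB Q (fun y x => T y * V y x) : ℝ) : EReal) := by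
  unfold DTQ mutB
  rw [← ereal_sum_coe]
  refine Finset.sum_congr rfl fun y _ => ?_
  rw [Finset.sum_mul, ← Finset.sum_sub_distrib, ← ereal_sum_coe, marginal_mul hV]
  refine Finset.sum_congr rfl fun x _ => ?_
  by_cases h : T y * V y x = 0
  · simp [klTerm, h]
  obtain ⟨-, hQp, hPp⟩ := jointSet_pos hP hQ hJ (y := y) (x := x) h
  have hT : T y ≠ 0 := left_ne_zero_of_mul h
  rw [klTerm_of_ac (fun e => absurd e (mul_ne_zero hT hQp.ne')), Real.log_mul hT hQp.ne']
  congr 1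
  ring

lemma DQP_eq_top {T : 𝓨 → ℝ} {V : 𝓨 → 𝓧 → ℝ} (hT : IsPMF T) (hV : IsCondPMF V)
    (hJ : (fun y x => T y * V y x) ∉ jointSet Q P) : DQP T V Q P = ⊤ := by
  have : ∃ y x, Q x * P x y = 0 ∧ T y * V y x ≠ 0 := by
    by_contra! h
    exact hJ ⟨fun y x => mul_nonneg (hT.1 y) ((hV y).1 x),
      by simp_rw [marginal_mul hV]; exact hT.2, h⟩
  obtain ⟨y, x, h1, h2⟩ := this
  refine ereal_sum_eq_top _ (fun y => ereal_sum_ne_bot _ _ fun x => klTerm_ne_bot _ _) y ?_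
  exact ereal_sum_eq_top _ (fun x => klTerm_ne_bot _ _) x (by simp [klTerm, h1, h2])

lemma value_eq_coe (hP : IsChannel P) (hQ : IsPMF Q) (R : ℝ) {T : 𝓨 → ℝ} {V : 𝓨 → 𝓧 → ℝ}
    (hV : IsCondPMF V) (hJ : (fun y x => T y * V y x) ∈ jointSet Q P) :
    DQP T V Q P + max ((R : EReal) - DTQ T V Q) 0
      = ((cost Q P R (fun y x => T y * V y x) : ℝ) : EReal) := by
  rw [DQP_eq_coe hP hQ hJ, DTQ_eq_coe hP hQ hV hJ, cost, EReal.coe_add,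
    EReal.coe_strictMono.monotone.map_max, EReal.coe_sub, EReal.coe_zero]

lemma value_eq_top (R : ℝ) {T : 𝓨 → ℝ} {V : 𝓨 → 𝓧 → ℝ} (hT : IsPMF T) (hV : IsCondPMF V)
    (hJ : (fun y x => T y * V y x) ∉ jointSet Q P) :
    DQP T V Q P + max ((R : EReal) - DTQ T V Q) 0 = ⊤ := by
  rw [DQP_eq_top hT hV hJ]
  exact EReal.top_add_of_ne_bot (ne_of_gt (lt_of_lt_of_le EReal.bot_lt_zero (le_max_right _ _)))

/-- Every joint distribution factors as a marginal and a conditional distribution. -/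
lemma exists_factor (hQ : IsPMF Q) {J : 𝓨 → 𝓧 → ℝ} (hJ : J ∈ jointSet Q P) :
    ∃ T : 𝓨 → ℝ, ∃ V : 𝓨 → 𝓧 → ℝ, IsPMF T ∧ IsCondPMF V ∧ (fun y x => T y * V y x) = J := by
  classical
  -- `Q` serves as an arbitrary conditional distribution where the marginal vanishes.
  refine ⟨fun y => ∑ x, J y x,
    fun y => if ∑ x, J y x = 0 then Q else fun x => J y x / ∑ x, J y x,
    ⟨fun y => Finset.sum_nonneg fun x _ => hJ.1 y x, hJ.2.1⟩, fun y => ?_, ?_⟩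
  · dsimp only
    split_ifs with h
    · exact hQ
    · refine ⟨fun x => div_nonneg (hJ.1 y x) (Finset.sum_nonneg fun x _ => hJ.1 y x), ?_⟩
      rw [← Finset.sum_div]
      exact div_self h
  · funext y x
    dsimp only
    split_ifs with h
    · rw [h, zero_mul]
      exact ((Finset.sum_eq_zero_iff_of_nonneg fun x _ => hJ.1 y x).1 h x (Finset.mem_univ x)).symm
    · field_simp

end Extended

theorem stmt_8 {𝓧 𝓨 : Type*} [Fintype 𝓧] [Fintype 𝓨] [Nonempty 𝓧] [Nonempty 𝓨]
    (P : 𝓧 → 𝓨 → ℝ) (hP : IsChannel P) (Q : 𝓧 → ℝ) (hQ : IsPMF Q) (R : ℝ) :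
    EcML R Q P
      = ((sSup {e : ℝ | ∃ ρ ∈ Set.Icc (-1 : ℝ) 0, e = E0full ρ Q P - ρ * R} : ℝ) : EReal)
    ∧ ∀ ρ ∈ Set.Icc (-1 : ℝ) 0,
        E0full ρ Q P - ρ * R
          = sSup {e : ℝ | ∃ ρ' ∈ Set.Icc (-1 : ℝ) 0, e = E0full ρ' Q P - ρ' * R} →
        ((-1 < ρ →
            (∃ T : 𝓨 → ℝ, ∃ V : 𝓨 → 𝓧 → ℝ, IsPMF T ∧ IsCondPMF V ∧
              DQP T V Q P + max ((R : EReal) - DTQ T V Q) 0 = EcML R Q P ∧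
              ∀ x y, T y * V y x = Jrho ρ Q P x y)
            ∧ ∀ (T : 𝓨 → ℝ) (V : 𝓨 → 𝓧 → ℝ), IsPMF T → IsCondPMF V →
                DQP T V Q P + max ((R : EReal) - DTQ T V Q) 0 = EcML R Q P →
                ∀ x y, T y * V y x = Jrho ρ Q P x y)
         ∧ (ρ = -1 →
            (∀ (T : 𝓨 → ℝ) (V : 𝓨 → 𝓧 → ℝ), IsPMF T → IsCondPMF V →
                DQP T V Q P + max ((R : EReal) - DTQ T V Q) 0 = EcML R Q P →
                ∃ V' : 𝓨 → 𝓧 → ℝ, IsCondPMF V' ∧ AdmissibleAtM1 Q P V' ∧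
                  DTQ (Tm1 Q P) V' Q ≤ (R : EReal) ∧
                  ∀ x y, T y * V y x = Tm1 Q P y * V' y x)
            ∧ ∀ V' : 𝓨 → 𝓧 → ℝ, IsCondPMF V' → AdmissibleAtM1 Q P V' →
                DTQ (Tm1 Q P) V' Q ≤ (R : EReal) →
                DQP (Tm1 Q P) V' Q P + max ((R : EReal) - DTQ (Tm1 Q P) V' Q) 0
                  = EcML R Q P)) := by
  obtain ⟨J₀, hJ₀, hmax⟩ := strong_duality hP hQ R
  obtain ⟨T₀, V₀, hT₀, hV₀, hJV₀⟩ := exists_factor hQ hJ₀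
  have hval₀ : DQP T₀ V₀ Q P + max ((R : EReal) - DTQ T₀ V₀ Q) 0
      = ((cost Q P R J₀ : ℝ) : EReal) := by
    rw [value_eq_coe hP hQ R hV₀ (by rw [hJV₀]; exact hJ₀), hJV₀]
  have hEc : EcML R Q P = ((cost Q P R J₀ : ℝ) : EReal) := by
    refine IsLeast.csInf_eq ⟨⟨T₀, V₀, hT₀, hV₀, hval₀.symm⟩, ?_⟩
    rintro v ⟨T, V, hT, hV, rfl⟩
    by_cases hJ : (fun y x => T y * V y x) ∈ jointSet Q P
    · rw [value_eq_coe hP hQ R hV hJ, EReal.coe_le_coe_iff]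
      obtain ⟨ρ, hρ, e⟩ := hmax.1
      rw [e]
      exact (sub_le_sub_right (E0full_le_pen hP hQ hρ hJ) _).trans (lagrangian_le_cost hρ R _)
    · rw [value_eq_top R hT hV hJ]; exact le_top
  rw [hEc, hmax.csSup_eq]
  -- A minimizer is supported in `{Q·P > 0}` and has the optimal real cost.
  have hmin : ∀ (T : 𝓨 → ℝ) (V : 𝓨 → 𝓧 → ℝ), IsPMF T → IsCondPMF V →
      DQP T V Q P + max ((R : EReal) - DTQ T V Q) 0 = ((cost Q P R J₀ : ℝ) : EReal) →
      (fun y x => T y * V y x) ∈ jointSet Q P ∧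
        cost Q P R (fun y x => T y * V y x) = cost Q P R J₀ := by
    intro T V hT hV h
    by_cases hJ : (fun y x => T y * V y x) ∈ jointSet Q P
    · rw [value_eq_coe hP hQ R hV hJ, EReal.coe_eq_coe_iff] at h
      exact ⟨hJ, h⟩
    · rw [value_eq_top R hT hV hJ] at h
      exact absurd h.symm (EReal.coe_ne_top _)
  refine ⟨rfl, fun ρ hρ hopt => ⟨fun hlt => ?_, ?_⟩⟩
  · rw [E0full_of_lt hlt] at hopt
    have huniq : ∀ (T : 𝓨 → ℝ) (V : 𝓨 → 𝓧 → ℝ), IsPMF T → IsCondPMF V →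
        DQP T V Q P + max ((R : EReal) - DTQ T V Q) 0 = ((cost Q P R J₀ : ℝ) : EReal) →
        ∀ x y, T y * V y x = Jrho ρ Q P x y := by
      intro T V hT hV h
      obtain ⟨hJ, hc⟩ := hmin T V hT hV h
      have hle := lagrangian_le_cost (Q := Q) (P := P) hρ R (fun y x => T y * V y x)
      exact eq_Jrho hP hQ hlt hJ (by linarith)
    exact ⟨⟨T₀, V₀, hT₀, hV₀, hval₀, huniq T₀ V₀ hT₀ hV₀ hval₀⟩, huniq⟩
  · rintro rfl
    rw [E0full_neg_one] at hopt
    constructor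
    · intro T V hT hV h
      obtain ⟨hJ, hc⟩ := hmin T V hT hV h
      have hle := lagrangian_le_cost (Q := Q) (P := P) hρ R (fun y x => T y * V y x)
      obtain ⟨hm, hs⟩ := minimizer_neg_one hP hQ hJ (by linarith)
      have hTe : ∀ y, T y = Tm1 Q P y := fun y => (marginal_mul hV y).symm.trans (hm y)
      classical
      choose W hW hWA using exists_argmax_pmf hP hQ
      -- `V` is unconstrained where `T` vanishes, so it is replaced there by an admissible choice.
      let V' : 𝓨 → 𝓧 → ℝ := fun y => if T y = 0 then W y else V y
      have hV' : IsCondPMF V' := fun y => by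
        dsimp only [V']
        split_ifs
        exacts [hW y, hV y]
      have hJe : ∀ y x, T y * V y x = Tm1 Q P y * V' y x := fun y x => by
        rw [← hTe y]
        dsimp only [V']
        split_ifs with h0
        · simp [h0]
        · rfl
      have hJe' : (fun y x => Tm1 Q P y * V' y x) = fun y x => T y * V y x := by
        funext y x; exact (hJe y x).symm
      refine ⟨V', hV', fun y x hx => ?_, ?_, fun x y => hJe y x⟩
      · dsimp only [V']
        split_ifs with h0
        · exact hWA y x hx
        · by_contra hv
          exact hx ((isArgmax_iff hP hQ x y).2 (hs y x (mul_ne_zero h0 hv)))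
      · rw [DTQ_eq_coe hP hQ hV' (by rw [hJe']; exact hJ), hJe', EReal.coe_le_coe_iff]
        -- If `B > R` then the cost is `A`, which exceeds the lower bound `A + R − B`.
        have hlow := E0m1_le_pen hP hQ hJ
        have h1 := minimizer_neg_one hP hQ hJ (by linarith)
        have hp : pen Q P (-1) (fun y x => T y * V y x) ≤ E0m1 Q P := by linarith
        rw [pen_eq_add] at hp hlow
        rw [cost] at hc
        have := le_max_right (R - mutB Q (fun y x => T y * V y x)) 0
        linarith
    · intro V' hV' hA hR
      obtain ⟨hJ, hp⟩ := admissible_minimizes hP hQ hV' hA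
      rw [value_eq_coe hP hQ R hV' hJ, EReal.coe_eq_coe_iff]
      rw [DTQ_eq_coe hP hQ hV' hJ, EReal.coe_le_coe_iff] at hR
      rw [pen_eq_add] at hp
      rw [cost, max_eq_left (by linarith)]
      linarith
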